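/- arXiv:math/0309415 — 2 statements merged into one kernel-verified Lean document; each statement's English description precedes it below -/
import Mathlib

section
/- (Main Proposition 2.) Let z₁,z₂ be holomorphic functions of (w₁,w₂) on an open subset of ℂ² with Jacobian J := ∂_{w₁}z₁·∂_{w₂}z₂ − ∂_{w₁}z₂·∂_{w₂}z₁ ≠ 0, and let f̂₁,f̂₂ be holomorphic functions of (w₁,w₂). Define f₁ := f̂₁·∂_{w₁}z₁ + f̂₂·∂_{w₂}z₁ and f₂ := f̂₁·∂_{w₁}z₂ + f̂₂·∂_{w₂}z₂, and set ∂(f₁,f₂)/∂(z₁,z₂) := (∂_{w₁}f₁·∂_{w₂}f₂ − ∂_{w₁}f₂·∂_{w₂}f₁)/J. For differential operators P,Q write D(P,Q) := P(z₁)·Q(z₂) − P(z₂)·Q(z₁). Then: ∂(f₁,f₂)/∂(z₁,z₂) = (∂_{w₁}f̂₁·∂_{w₂}f̂₂ − ∂_{w₁}f̂₂·∂_{w₂}f̂₁) − f̂₁·∂_{w₂}f̂₁·D(∂_{w₁},∂²_{w₁w₁})/J + f̂₂·∂_{w₁}f̂₂·D(∂_{w₂},∂²_{w₂w₂})/J −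 f̂₁·∂_{w₂}f̂₂·D(∂_{w₂},∂²_{w₁w₁})/J − (f̂₂·∂_{w₂}f̂₁ − f̂₁·∂_{w₁}f̂₁)·D(∂_{w₁},∂²_{w₁w₂})/J + f̂₂·∂_{w₁}f̂₁·D(∂_{w₁},∂²_{w₂w₂})/J + (f̂₁·∂_{w₁}f̂₂ − f̂₂·∂_{w₂}f̂₂)·D(∂_{w₂},∂²_{w₁w₂})/J + f̂₁²·D(∂²_{w₁w₁},∂²_{w₁w₂})/J − f̂₂²·D(∂²_{w₂w₂},∂²_{w₁w₂})/J + f̂₁·f̂₂·D(∂²_{w₁w₁},∂²_{w₂w₂})/J. -/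
open Complex Matrix

noncomputable section

/-- Partial derivative in the first complex variable. -/
def pdx (f : ℂ × ℂ → ℂ) (p : ℂ × ℂ) : ℂ := deriv (fun x => f (x, p.2)) p.1

/-- Partial derivative in the second complex variable. -/
def pdy (f : ℂ × ℂ → ℂ) (p : ℂ × ℂ) : ℂ := deriv (fun y => f (p.1, y)) p.2

/-- The Jacobian `J(u₁,u₂) = ∂ₓu₁·∂ᵧu₂ − ∂ₓu₂·∂ᵧu₁`. -/
def Jac (u₁ u₂ : ℂ × ℂ → ℂ) (p : ℂ × ℂ) : ℂ :=
  pdx u₁ p * pdy u₂ p - pdx u₂ p * pdy u₁ p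

/-- The GL(3) derivative `{u₁,u₂;x,y}ₓ`. -/
def brX (u₁ u₂ : ℂ × ℂ → ℂ) (p : ℂ × ℂ) : ℂ :=
  (pdx u₁ p * pdx (pdx u₂) p - pdx u₂ p * pdx (pdx u₁) p) / Jac u₁ u₂ p

/-- The GL(3) derivative `{u₁,u₂;x,y}ᵧ`. -/
def brY (u₁ u₂ : ℂ × ℂ → ℂ) (p : ℂ × ℂ) : ℂ :=
  -(pdy u₁ p * pdy (pdy u₂) p - pdy u₂ p * pdy (pdy u₁) p) / Jac u₁ u₂ p

/-- The GL(3) derivative `[u₁,u₂;x,y]ₓ`. -/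
def sqX (u₁ u₂ : ℂ × ℂ → ℂ) (p : ℂ × ℂ) : ℂ :=
  ((pdy u₁ p * pdx (pdx u₂) p - pdy u₂ p * pdx (pdx u₁) p)
      + 2 * (pdx u₁ p * pdx (pdy u₂) p - pdx u₂ p * pdx (pdy u₁) p)) / Jac u₁ u₂ p

/-- The GL(3) derivative `[u₁,u₂;x,y]ᵧ`. -/
def sqY (u₁ u₂ : ℂ × ℂ → ℂ) (p : ℂ × ℂ) : ℂ :=
  -((pdx u₁ p * pdy (pdy u₂) p - pdx u₂ p * pdy (pdy u₁) p)
      + 2 * (pdy u₁ p * pdx (pdy u₂) p - pdy u₂ p * pdx (pdy u₁) p)) / Jac u₁ u₂ p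

/-!
With `f = g ∂₁z + h ∂₂z`, the Leibniz rule gives `∂₁f = P(z)` and `∂₂f = Q(z)` for the operators
`P = (∂₁g) ∂₁ + (∂₁h) ∂₂ + g ∂₁∂₁ + h ∂₁∂₂` and `Q = (∂₂g) ∂₁ + (∂₂h) ∂₂ + g ∂₁∂₂ + h ∂₂∂₂`, so
the Jacobian of `(f₁, f₂)` is `D(P, Q)`, and the formula is its expansion as an alternating bilinear
form. The analytic content is that `∂₂z` is differentiable in `w₁` and that `∂₂∂₁z = ∂₁∂₂z`: by the
Schwarz lemma, the difference quotients of `z` in `w₂` converge to `∂₂z` uniformly in `w₁`, and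
Weierstrass' theorem on locally uniform limits allows differentiating this limit in `w₁`.
-/

section MixedDerivatives

open Metric Set Filter Topology

lemma eventually_differentiableOn_slope {𝕜 E F : Type*} [NontriviallyNormedField 𝕜]
    [NormedAddCommGroup E] [NormedSpace 𝕜 E] [NormedAddCommGroup F] [NormedSpace 𝕜 F]
    {f : E → 𝕜 → F} {U : Set E} {c : 𝕜}
    (hd : ∀ᶠ y in 𝓝 c, DifferentiableOn 𝕜 (fun x => f x y) U) :
    ∀ᶠ y in 𝓝[≠] c, DifferentiableOn 𝕜 (fun x => slope (f x) c y) U := by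
  filter_upwards [nhdsWithin_le_nhds hd] with y hy
  simp only [slope_def_module]
  exact (hy.fun_sub hd.self_of_nhds).fun_const_smul _

variable {F : Type*} [NormedAddCommGroup F] [NormedSpace ℂ F] [CompleteSpace F]

lemma dist_dslope_deriv_le_of_mapsTo_ball {f : ℂ → F} {c w : ℂ} {r M : ℝ}
    (hd : DifferentiableOn ℂ f (ball c r)) (h_maps : MapsTo f (ball c r) (closedBall (f c) M))
    (hw : w ∈ ball c r) :
    dist (dslope f c w) (deriv f c) ≤ 2 * (M / r) / r * dist w c := by
  have hr : 0 < r := pos_of_mem_ball hw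
  have hbound : ∀ v ∈ ball c r, ‖dslope f c v‖ ≤ M / r := fun v hv =>
    norm_dslope_le_div_of_mapsTo_ball hd h_maps hv
  have h_maps' : MapsTo (dslope f c) (ball c r) (closedBall (dslope f c c) (2 * (M / r))) := by
    intro v hv
    rw [mem_closedBall, dist_eq_norm]
    linarith [norm_sub_le (dslope f c v) (dslope f c c), hbound v hv, hbound c (mem_ball_self hr)]
  rw [← dslope_same f c]
  exact dist_le_div_mul_dist_of_mapsTo_ball
    ((differentiableOn_dslope (ball_mem_nhds c hr)).2 hd) h_maps' hw

lemma tendstoUniformlyOn_slope_of_mapsTo_ball {ι : Type*} {f : ι → ℂ → F} {S : Set ι} {c : ℂ}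
    {r M : ℝ} (hr : 0 < r) (hd : ∀ i ∈ S, DifferentiableOn ℂ (f i) (ball c r))
    (h_maps : ∀ i ∈ S, MapsTo (f i) (ball c r) (closedBall (f i c) M)) :
    TendstoUniformlyOn (fun w i => slope (f i) c w) (fun i => deriv (f i) c) (𝓝[≠] c) S := by
  rw [Metric.tendstoUniformlyOn_iff]
  intro ε hε
  have hlim : Tendsto (fun w => 2 * (M / r) / r * dist w c) (𝓝[≠] c) (𝓝 0) := by
    have hcont : Continuous (fun w => 2 * (M / r) / r * dist w c) := by fun_prop
    simpa using (hcont.tendsto c).mono_left nhdsWithin_le_nhds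
  filter_upwards [hlim.eventually_lt_const hε, nhdsWithin_le_nhds (ball_mem_nhds c hr),
    self_mem_nhdsWithin] with w hwε hw hne i hi
  rw [dist_comm, ← dslope_of_ne _ hne]
  exact (dist_dslope_deriv_le_of_mapsTo_ball (hd i hi) (h_maps i hi) hw).trans_lt hwε

lemma exists_tendstoUniformlyOn_slope_snd {X : Type*} [TopologicalSpace X] {f : X × ℂ → F}
    {p : X × ℂ} (hc : ContinuousAt f p)
    (hd : ∀ᶠ q in 𝓝 p, DifferentiableAt ℂ (fun y => f (q.1, y)) q.2) :
    ∃ U ∈ 𝓝 p.1, TendstoUniformlyOn (fun y x => slope (fun y => f (x, y)) p.2 y)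
      (fun x => deriv (fun y => f (x, y)) p.2) (𝓝[≠] p.2) U := by
  obtain ⟨U, hU, V, hV, hUV⟩ :=
    mem_nhds_prod_iff.1 (inter_mem hd (hc (ball_mem_nhds (f p) one_pos)))
  obtain ⟨r, hr, hrV⟩ := Metric.mem_nhds_iff.1 hV
  have hmem : ∀ x ∈ U, ∀ y ∈ ball p.2 r,
      DifferentiableAt ℂ (fun y => f (x, y)) y ∧ dist (f (x, y)) (f p) < 1 :=
    fun x hx y hy => hUV (mk_mem_prod hx (hrV hy))
  refine ⟨U, hU, tendstoUniformlyOn_slope_of_mapsTo_ball (M := 2) hr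
    (fun x hx y hy => (hmem x hx y hy).1.differentiableWithinAt) fun x hx y hy => ?_⟩
  rw [mem_closedBall]
  linarith [dist_triangle_right (f (x, y)) (f (x, p.2)) (f p), (hmem x hx y hy).2,
    (hmem x hx p.2 (mem_ball_self hr)).2]

section LimitOfSlopes

variable {f : ℂ → ℂ → F} {f' : ℂ → F} {U : Set ℂ} {c : ℂ} (hU : IsOpen U)
  (hd : ∀ᶠ y in 𝓝 c, DifferentiableOn ℂ (fun x => f x y) U)
  (hlim : TendstoLocallyUniformlyOn (fun y x => slope (f x) c y) f' (𝓝[≠] c) U)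

include hU hd hlim

lemma differentiableOn_of_tendstoLocallyUniformlyOn_slope : DifferentiableOn ℂ f' U :=
  hlim.differentiableOn (eventually_differentiableOn_slope hd) hU

lemma hasDerivAt_deriv_of_tendstoLocallyUniformlyOn_slope {x : ℂ} (hx : x ∈ U) :
    HasDerivAt (fun y => deriv (fun x => f x y) x) (deriv f' x) c := by
  rw [hasDerivAt_iff_tendsto_slope]
  refine ((hlim.deriv (eventually_differentiableOn_slope hd) hU).tendsto_at hx).congr' ?_
  filter_upwards [nhdsWithin_le_nhds hd] with y hy
  have hdiff {v : ℂ} (hv : DifferentiableOn ℂ (fun x => f x v) U) :=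
    (hv.differentiableAt (hU.mem_nhds hx)).hasDerivAt
  simp only [Function.comp_apply, slope_def_module]
  exact (((hdiff hy).fun_sub (hdiff hd.self_of_nhds)).fun_const_smul (y - c)⁻¹).deriv

end LimitOfSlopes

section SeparatelyHolomorphic

variable {f : ℂ × ℂ → F} {p : ℂ × ℂ} (hc : ContinuousAt f p)
  (hd₁ : ∀ᶠ q in 𝓝 p, DifferentiableAt ℂ (fun x => f (x, q.2)) q.1)
  (hd₂ : ∀ᶠ q in 𝓝 p, DifferentiableAt ℂ (fun y => f (q.1, y)) q.2)

include hc hd₁ hd₂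

lemma exists_isOpen_tendstoLocallyUniformlyOn_slope_snd :
    ∃ U, IsOpen U ∧ p.1 ∈ U ∧
      (∀ᶠ y in 𝓝 p.2, DifferentiableOn ℂ (fun x => f (x, y)) U) ∧
      TendstoLocallyUniformlyOn (fun y x => slope (fun y => f (x, y)) p.2 y)
        (fun x => deriv (fun y => f (x, y)) p.2) (𝓝[≠] p.2) U := by
  obtain ⟨U, hU, hlim⟩ := exists_tendstoUniformlyOn_slope_snd hc hd₂
  obtain ⟨U', hU', V, hV, hUV⟩ := mem_nhds_prod_iff.1 hd₁
  refine ⟨interior (U ∩ U'), isOpen_interior, mem_interior_iff_mem_nhds.2 (inter_mem hU hU'), ?_,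
    (hlim.mono (interior_subset.trans inter_subset_left)).tendstoLocallyUniformlyOn⟩
  filter_upwards [hV] with y hy x hx
  have hdiff : DifferentiableAt ℂ (fun x => f (x, y)) x :=
    hUV (mk_mem_prod (interior_subset hx).2 hy)
  exact hdiff.differentiableWithinAt

lemma differentiableAt_deriv_snd :
    DifferentiableAt ℂ (fun x => deriv (fun y => f (x, y)) p.2) p.1 := by
  obtain ⟨U, hU, hpU, hd, hlim⟩ := exists_isOpen_tendstoLocallyUniformlyOn_slope_snd hc hd₁ hd₂
  exact (differentiableOn_of_tendstoLocallyUniformlyOn_slope hU hd hlim).differentiableAt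
    (hU.mem_nhds hpU)

lemma hasDerivAt_deriv_fst_swap :
    HasDerivAt (fun y => deriv (fun x => f (x, y)) p.1)
      (deriv (fun x => deriv (fun y => f (x, y)) p.2) p.1) p.2 := by
  obtain ⟨U, hU, hpU, hd, hlim⟩ := exists_isOpen_tendstoLocallyUniformlyOn_slope_snd hc hd₁ hd₂
  exact hasDerivAt_deriv_of_tendstoLocallyUniformlyOn_slope hU hd hlim hpU

end SeparatelyHolomorphic

lemma differentiableAt_deriv_of_eventually_differentiableAt {f : ℂ → F} {c : ℂ}
    (hf : ∀ᶠ w in 𝓝 c, DifferentiableAt ℂ f w) : DifferentiableAt ℂ (deriv f) c :=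
  (analyticAt_iff_eventually_differentiableAt.2 hf).deriv.differentiableAt

end MixedDerivatives

section Slices

variable {𝕜 E₁ E₂ F : Type*} [NontriviallyNormedField 𝕜] [NormedAddCommGroup E₁] [NormedSpace 𝕜 E₁]
  [NormedAddCommGroup E₂] [NormedSpace 𝕜 E₂] [NormedAddCommGroup F] [NormedSpace 𝕜 F]
  {f : E₁ × E₂ → F} {p : E₁ × E₂}

lemma differentiableAt_slice_fst (hf : DifferentiableAt 𝕜 f p) :
    DifferentiableAt 𝕜 (fun x => f (x, p.2)) p.1 :=
  hf.comp p.1 (f := fun x => (x, p.2)) (by fun_prop)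

lemma differentiableAt_slice_snd (hf : DifferentiableAt 𝕜 f p) :
    DifferentiableAt 𝕜 (fun y => f (p.1, y)) p.2 :=
  hf.comp p.2 (f := fun y => (p.1, y)) (by fun_prop)

end Slices

section PartialDerivatives

open Filter Topology

variable {z : ℂ × ℂ → ℂ} {p : ℂ × ℂ} (hz : ∀ᶠ q in 𝓝 p, DifferentiableAt ℂ z q)

include hz

lemma hasDerivAt_pdx_fst : HasDerivAt (fun x => pdx z (x, p.2)) (pdx (pdx z) p) p.1 := by
  have hslice : Tendsto (fun x => (x, p.2)) (𝓝 p.1) (𝓝 p) := by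
    have hcont : Continuous fun x : ℂ => (x, p.2) := by fun_prop
    exact hcont.tendsto p.1
  have hz_slice : ∀ᶠ x in 𝓝 p.1, DifferentiableAt ℂ (fun x => z (x, p.2)) x :=
    (hslice.eventually hz).mono fun _ => differentiableAt_slice_fst
  exact (differentiableAt_deriv_of_eventually_differentiableAt hz_slice).hasDerivAt

lemma hasDerivAt_pdy_snd : HasDerivAt (fun y => pdy z (p.1, y)) (pdy (pdy z) p) p.2 := by
  have hslice : Tendsto (fun y => (p.1, y)) (𝓝 p.2) (𝓝 p) := by
    have hcont : Continuous fun y : ℂ => (p.1, y) := by fun_prop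
    exact hcont.tendsto p.2
  have hz_slice : ∀ᶠ y in 𝓝 p.2, DifferentiableAt ℂ (fun y => z (p.1, y)) y :=
    (hslice.eventually hz).mono fun _ => differentiableAt_slice_snd
  exact (differentiableAt_deriv_of_eventually_differentiableAt hz_slice).hasDerivAt

lemma hasDerivAt_pdy_fst : HasDerivAt (fun x => pdy z (x, p.2)) (pdx (pdy z) p) p.1 :=
  (differentiableAt_deriv_snd hz.self_of_nhds.continuousAt
    (hz.mono fun _ => differentiableAt_slice_fst)
    (hz.mono fun _ => differentiableAt_slice_snd)).hasDerivAt

lemma hasDerivAt_pdx_snd : HasDerivAt (fun y => pdx z (p.1, y)) (pdx (pdy z) p) p.2 :=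
  hasDerivAt_deriv_fst_swap hz.self_of_nhds.continuousAt
    (hz.mono fun _ => differentiableAt_slice_fst)
    (hz.mono fun _ => differentiableAt_slice_snd)

end PartialDerivatives

/-- The derivative `g ∂₁z + h ∂₂z` of `z` along the vector field `(g, h)`; it turns `z₁, z₂`
into `f₁, f₂`. -/
def fieldDeriv (g h z : ℂ × ℂ → ℂ) (p : ℂ × ℂ) : ℂ := g p * pdx z p + h p * pdy z p

/-- The determinant `D(P, Q) = P(z₁) Q(z₂) - P(z₂) Q(z₁)` of two operators, evaluated at a point.
The operator `∂₁∂₂` is encoded as `pdx ∘ pdy`. -/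
def opDet (P Q : (ℂ × ℂ → ℂ) → ℂ × ℂ → ℂ) (z₁ z₂ : ℂ × ℂ → ℂ) (p : ℂ × ℂ) : ℂ :=
  P z₁ p * Q z₂ p - P z₂ p * Q z₁ p

section FieldDeriv

open Filter Topology

variable {g h : ℂ × ℂ → ℂ} {p : ℂ × ℂ} (hg : DifferentiableAt ℂ g p) (hh : DifferentiableAt ℂ h p)

include hg hh

lemma pdx_fieldDeriv {z : ℂ × ℂ → ℂ} (hz : ∀ᶠ q in 𝓝 p, DifferentiableAt ℂ z q) :
    pdx (fieldDeriv g h z) p =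
      (pdx g p * pdx z p + g p * pdx (pdx z) p) + (pdx h p * pdy z p + h p * pdx (pdy z) p) :=
  (((differentiableAt_slice_fst hg).hasDerivAt.mul (hasDerivAt_pdx_fst hz)).add
    ((differentiableAt_slice_fst hh).hasDerivAt.mul (hasDerivAt_pdy_fst hz))).deriv

lemma pdy_fieldDeriv {z : ℂ × ℂ → ℂ} (hz : ∀ᶠ q in 𝓝 p, DifferentiableAt ℂ z q) :
    pdy (fieldDeriv g h z) p =
      (pdy g p * pdx z p + g p * pdx (pdy z) p) + (pdy h p * pdy z p + h p * pdy (pdy z) p) :=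
  (((differentiableAt_slice_snd hg).hasDerivAt.mul (hasDerivAt_pdx_snd hz)).add
    ((differentiableAt_slice_snd hh).hasDerivAt.mul (hasDerivAt_pdy_snd hz))).deriv

lemma jac_fieldDeriv {z₁ z₂ : ℂ × ℂ → ℂ} (hz₁ : ∀ᶠ q in 𝓝 p, DifferentiableAt ℂ z₁ q)
    (hz₂ : ∀ᶠ q in 𝓝 p, DifferentiableAt ℂ z₂ q) :
    Jac (fieldDeriv g h z₁) (fieldDeriv g h z₂) p =
      Jac g h p * Jac z₁ z₂ p
      - g p * pdy g p * opDet pdx (pdx ∘ pdx) z₁ z₂ p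
      + h p * pdx h p * opDet pdy (pdy ∘ pdy) z₁ z₂ p
      - g p * pdy h p * opDet pdy (pdx ∘ pdx) z₁ z₂ p
      - (h p * pdy g p - g p * pdx g p) * opDet pdx (pdx ∘ pdy) z₁ z₂ p
      + h p * pdx g p * opDet pdx (pdy ∘ pdy) z₁ z₂ p
      + (g p * pdx h p - h p * pdy h p) * opDet pdy (pdx ∘ pdy) z₁ z₂ p
      + g p ^ 2 * opDet (pdx ∘ pdx) (pdx ∘ pdy) z₁ z₂ p
      - h p ^ 2 * opDet (pdy ∘ pdy) (pdx ∘ pdy) z₁ z₂ p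
      + g p * h p * opDet (pdx ∘ pdx) (pdy ∘ pdy) z₁ z₂ p := by
  simp only [Jac, opDet, Function.comp_apply, pdx_fieldDeriv hg hh hz₁, pdx_fieldDeriv hg hh hz₂,
    pdy_fieldDeriv hg hh hz₁, pdy_fieldDeriv hg hh hz₂]
  ring

end FieldDeriv

/-- **Main Proposition 2.** The deformation of the Jacobian
`∂(f₁,f₂)/∂(z₁,z₂)` expressed through the hatted functions and the second derivative
determinants of `(z₁,z₂)`. Here the two independent complex variables are `(w₁,w₂)`,
`pdx`/`pdy` denote `∂_{w₁}`/`∂_{w₂}`, and `D(P,Q) = P(z₁)Q(z₂) − P(z₂)Q(z₁)`. -/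
theorem statement8 (Ω : Set (ℂ × ℂ)) (hΩ : IsOpen Ω)
    (z₁ z₂ fh₁ fh₂ : ℂ × ℂ → ℂ)
    (hz₁ : DifferentiableOn ℂ z₁ Ω) (hz₂ : DifferentiableOn ℂ z₂ Ω)
    (hfh₁ : DifferentiableOn ℂ fh₁ Ω) (hfh₂ : DifferentiableOn ℂ fh₂ Ω)
    (hJ : ∀ p ∈ Ω, Jac z₁ z₂ p ≠ 0)
    (f₁ f₂ : ℂ × ℂ → ℂ)
    (hf₁ : f₁ = fun p => fh₁ p * pdx z₁ p + fh₂ p * pdy z₁ p)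
    (hf₂ : f₂ = fun p => fh₁ p * pdx z₂ p + fh₂ p * pdy z₂ p) :
    ∀ p ∈ Ω,
      (pdx f₁ p * pdy f₂ p - pdx f₂ p * pdy f₁ p) / Jac z₁ z₂ p =
        (pdx fh₁ p * pdy fh₂ p - pdx fh₂ p * pdy fh₁ p)
        - fh₁ p * pdy fh₁ p *
            ((pdx z₁ p * pdx (pdx z₂) p - pdx z₂ p * pdx (pdx z₁) p) / Jac z₁ z₂ p)
        + fh₂ p * pdx fh₂ p *
            ((pdy z₁ p * pdy (pdy z₂) p - pdy z₂ p * pdy (pdy z₁) p) / Jac z₁ z₂ p)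
        - fh₁ p * pdy fh₂ p *
            ((pdy z₁ p * pdx (pdx z₂) p - pdy z₂ p * pdx (pdx z₁) p) / Jac z₁ z₂ p)
        - (fh₂ p * pdy fh₁ p - fh₁ p * pdx fh₁ p) *
            ((pdx z₁ p * pdx (pdy z₂) p - pdx z₂ p * pdx (pdy z₁) p) / Jac z₁ z₂ p)
        + fh₂ p * pdx fh₁ p *
            ((pdx z₁ p * pdy (pdy z₂) p - pdx z₂ p * pdy (pdy z₁) p) / Jac z₁ z₂ p)
        + (fh₁ p * pdx fh₂ p - fh₂ p * pdy fh₂ p) *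
            ((pdy z₁ p * pdx (pdy z₂) p - pdy z₂ p * pdx (pdy z₁) p) / Jac z₁ z₂ p)
        + (fh₁ p) ^ 2 *
            ((pdx (pdx z₁) p * pdx (pdy z₂) p - pdx (pdx z₂) p * pdx (pdy z₁) p) /
              Jac z₁ z₂ p)
        - (fh₂ p) ^ 2 *
            ((pdy (pdy z₁) p * pdx (pdy z₂) p - pdy (pdy z₂) p * pdx (pdy z₁) p) /
              Jac z₁ z₂ p)
        + fh₁ p * fh₂ p *
            ((pdx (pdx z₁) p * pdy (pdy z₂) p - pdx (pdx z₂) p * pdy (pdy z₁) p) /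
              Jac z₁ z₂ p) := by
  intro p hp
  have hΩp : Ω ∈ nhds p := hΩ.mem_nhds hp
  have hJp : Jac z₁ z₂ p ≠ 0 := hJ p hp
  obtain rfl : f₁ = fieldDeriv fh₁ fh₂ z₁ := hf₁
  obtain rfl : f₂ = fieldDeriv fh₁ fh₂ z₂ := hf₂
  rw [← Jac, ← Jac, jac_fieldDeriv (hfh₁.differentiableAt hΩp) (hfh₂.differentiableAt hΩp)
    (hz₁.eventually_differentiableAt hΩp) (hz₂.eventually_differentiableAt hΩp)]
  simp only [opDet, Function.comp_apply]
  field_simp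
end
end

section
/- (Main Theorem 1.) Let F₁,F₂,P₁,P₂ be holomorphic functions of (v₁,v₂) on an open set Ω ⊆ ℂ², and let w₁,w₂ : Ω → ℂ be holomorphic with Jacobian D := ∂_{v₁}w₁·∂_{v₂}w₂ − ∂_{v₁}w₂·∂_{v₂}w₁ ≠ 0 and J(w₁,w₂) ≠ 0 on Ω, satisfying the over-determined nonlinear system {w₁,w₂;v₁,v₂}_{v₁} = F₁, {w₁,w₂;v₁,v₂}_{v₂} = F₂, [w₁,w₂;v₁,v₂]_{v₁} = P₁, [w₁,w₂;v₁,v₂]_{v₂} = P₂. Set Δ := 1/D and let z : Ω → ℂ be holomorphic with z³ = Δ. Then z satisfies the linear system: ∂_{v₁v₁}z + (1/3)P₁·∂_{v₁}z − F₁·∂_{v₂}z + (∂_{v₂}F₁ − (1/3)∂_{v₁}P₁ − (2/9)P₁² − (2/3)F₁P₂)·z = 0; ∂_{v₁v₂}z − (1/3)P₂·∂_{v₁}z − (1/3)P₁·∂_{v₂}z + ((1/3)∂_{v₁}P₂ + (1/3)∂_{v₂}P₁ + (1/9)P₁P₂ − F₁F₂)·z = 0; ∂_{v₂v₂}z + (1/3)P₂·∂_{v₂}z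 − F₂·∂_{v₁}z + (∂_{v₁}F₂ − (1/3)∂_{v₂}P₂ − (2/9)P₂² − (2/3)F₂P₁)·z = 0. -/
open Complex Matrix

noncomputable section

/-!
Write `J` for the Jacobian of `(w₁, w₂)`. By Cramer's rule `w₁` and `w₂` solve one linear system
expressing the second derivatives `w_xx`, `w_xy`, `w_yy` through `w_x` and `w_y`. Its six
coefficients are determined by the four `GL(3)` derivatives together with `J_x / J` and `J_y / J`,
and the latter are `-3 u` and `-3 v` for `u = z_x / z`, `v = z_y / z`, because `J = z⁻³`. Equality
of the mixed third derivatives of `w₁` and `w₂` is a homogeneous linear condition on `(w_x, w_y)`,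
so `J ≠ 0` forces its coefficients to vanish. These compatibility conditions are Riccati equations
for `u` and `v`, and the substitution `u = z_x / z`, `v = z_y / z` turns them into the linear
system for `z`.

Derivatives of `wᵢ` are holomorphic since a directional derivative is a locally uniform limit of
difference quotients.
-/

section

open Filter Metric Set Topology

variable {E F ι : Type*} [NormedAddCommGroup E] [NormedSpace ℂ E]
  [NormedAddCommGroup F] [NormedSpace ℂ F] {φ : Filter ι}

theorem norm_fderiv_le_of_norm_le_on_ball {f : E → F} {c : E} {r M : ℝ} (hr : 0 < r)
    (hf : DifferentiableOn ℂ f (ball c r)) (hM : ∀ x ∈ ball c r, ‖f x‖ ≤ M) :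
    ‖fderiv ℂ f c‖ ≤ 2 * M / r := by
  refine Complex.norm_fderiv_le_div_of_mapsTo_ball hf (fun x hx => ?_) hr
  calc dist (f x) (f c) ≤ ‖f x‖ + ‖f c‖ := dist_le_norm_add_norm _ _
    _ ≤ 2 * M := by linarith [hM x hx, hM c (mem_ball_self hr)]

theorem tendstoUniformlyOn_fderiv_zero {G : ι → E → F} {c : E} {R r : ℝ} (hr : 0 < r)
    (hd : ∀ᶠ n in φ, DifferentiableOn ℂ (G n) (ball c (R + r)))
    (hG : TendstoUniformlyOn G 0 φ (ball c (R + r))) :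
    TendstoUniformlyOn (fun n => fderiv ℂ (G n)) 0 φ (ball c R) := by
  rw [Metric.tendstoUniformlyOn_iff] at *
  intro ε hε
  filter_upwards [hd, hG (ε * r / 3) (by positivity)] with n hdn hGn x hx
  have hsub : ball x r ⊆ ball c (R + r) := ball_subset_ball' (by linarith [mem_ball.1 hx])
  simp only [Pi.zero_apply, dist_zero_left] at hGn ⊢
  calc ‖fderiv ℂ (G n) x‖ ≤ 2 * (ε * r / 3) / r :=
        norm_fderiv_le_of_norm_le_on_ball hr (hdn.mono hsub) fun y hy => (hGn y (hsub hy)).le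
    _ < ε := by field_simp; linarith

theorem uniformCauchySeqOn_fderiv {G : ι → E → F} {c : E} {R r : ℝ} (hr : 0 < r)
    (hd : ∀ᶠ n in φ, DifferentiableOn ℂ (G n) (ball c (R + r)))
    (hG : UniformCauchySeqOn G φ (ball c (R + r))) :
    UniformCauchySeqOn (fun n => fderiv ℂ (G n)) φ (ball c R) := by
  rw [SeminormedAddGroup.uniformCauchySeqOn_iff_tendstoUniformlyOn_zero] at *
  have hdd : ∀ᶠ n in φ ×ˢ φ, DifferentiableOn ℂ (G n.1) (ball c (R + r)) ∧
      DifferentiableOn ℂ (G n.2) (ball c (R + r)) := hd.prod_mk hd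
  refine (tendstoUniformlyOn_fderiv_zero hr
    (hdd.mono fun n hn => hn.1.fun_neg.fun_add hn.2) hG).congr ?_
  filter_upwards [hdd] with n hn x hx
  have hnhds := isOpen_ball.mem_nhds (ball_subset_ball (by linarith : R ≤ R + r) hx)
  simp only [fderiv_fun_add (hn.1.differentiableAt hnhds).fun_neg (hn.2.differentiableAt hnhds),
    fderiv_fun_neg]

theorem differentiableOn_of_tendstoUniformlyOn [CompleteSpace F] [φ.NeBot]
    {G : ι → E → F} {g : E → F} {U : Set E} (hU : IsOpen U)
    (hd : ∀ᶠ n in φ, DifferentiableOn ℂ (G n) U) (hG : TendstoUniformlyOn G g φ U) :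
    DifferentiableOn ℂ g U := by
  intro p hp
  obtain ⟨R, hR, hRU⟩ := Metric.isOpen_iff.1 hU p hp
  obtain ⟨r, hr, rfl⟩ : ∃ r > 0, R = r + r := ⟨R / 2, by positivity, by ring⟩
  have hcauchy := uniformCauchySeqOn_fderiv hr (hd.mono fun n hn => hn.mono hRU)
    (hG.mono hRU).uniformCauchySeqOn
  choose! g' hg' using fun x hx => cauchy_map_iff_exists_tendsto.1 (hcauchy.cauchy_map (x := x) hx)
  have hg'_unif := hcauchy.tendstoUniformlyOn_of_tendsto hg'
  refine (hasFDerivAt_of_tendstoUniformlyOnFilter (f := G)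
    (hg'_unif.tendstoUniformlyOnFilter.mono_right (le_principal_iff.2 (ball_mem_nhds p hr)))
    ?_ ?_).differentiableAt.differentiableWithinAt
  · filter_upwards [hd.prod_mk (hU.mem_nhds hp)] with ⟨n, x⟩ hnx
    exact (hnx.1.differentiableAt (hU.mem_nhds hnx.2)).hasFDerivAt
  · filter_upwards [hU.mem_nhds hp] with x hx using hG.tendsto_at hx

theorem norm_dslope_sub_deriv_le [CompleteSpace F] {g : ℂ → F} {c s : ℂ} {R M : ℝ}
    (hg : DifferentiableOn ℂ g (ball c R)) (hM : MapsTo g (ball c R) (closedBall (g c) M))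
    (hs : s ∈ ball c R) : ‖dslope g c s - deriv g c‖ ≤ 2 * M / R ^ 2 * ‖s - c‖ := by
  -- Schwarz's lemma bounds the difference quotient, and applied once more its oscillation.
  have hR : 0 < R := pos_of_mem_ball hs
  have hslope : ∀ t ∈ ball c R, ‖dslope g c t‖ ≤ M / R := fun t ht =>
    Complex.norm_dslope_le_div_of_mapsTo_ball hg hM ht
  have hmaps : MapsTo (dslope g c) (ball c R) (closedBall (dslope g c c) (2 * M / R)) := by
    intro t ht
    rw [mem_closedBall, dist_eq_norm]
    calc ‖dslope g c t - dslope g c c‖ ≤ M / R + M / R :=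
          norm_sub_le_of_le (hslope t ht) (hslope c (mem_ball_self hR))
      _ = 2 * M / R := by ring
  have hd : DifferentiableOn ℂ (dslope g c) (ball c R) :=
    (Complex.differentiableOn_dslope (ball_mem_nhds c hR)).2 hg
  have h := Complex.dist_le_div_mul_dist_of_mapsTo_ball hd hmaps hs
  rwa [dslope_same, dist_eq_norm, dist_eq_norm, div_div, ← sq] at h

theorem tendstoUniformlyOn_dslope_deriv [CompleteSpace F] {X : Type*} {g : X → ℂ → F}
    {S : Set X} {R M : ℝ} (hR : 0 < R) (hg : ∀ x ∈ S, DifferentiableOn ℂ (g x) (ball 0 R))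
    (hM : ∀ x ∈ S, MapsTo (g x) (ball 0 R) (closedBall (g x 0) M)) :
    TendstoUniformlyOn (fun s x => dslope (g x) 0 s) (fun x => deriv (g x) 0) (𝓝[≠] 0) S := by
  have hlim : Tendsto (fun s : ℂ => 2 * M / R ^ 2 * ‖s - 0‖) (𝓝[≠] 0) (𝓝 0) := by
    refine (Continuous.tendsto' (by fun_prop) _ _ ?_).mono_left nhdsWithin_le_nhds
    simp
  rw [Metric.tendstoUniformlyOn_iff]
  intro ε hε
  filter_upwards [hlim.eventually_lt_const hε, mem_nhdsWithin_of_mem_nhds (ball_mem_nhds 0 hR)]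
    with s hsε hs x hx
  rw [dist_comm, dist_eq_norm]
  exact (norm_dslope_sub_deriv_le (hg x hx) (hM x hx) hs).trans_lt hsε

theorem exists_ball_add_smul_mem_of_mem_nhds {p : E} {U : Set E} (hU : U ∈ 𝓝 p) (v : E) :
    ∃ δ > 0, ∀ x ∈ ball p δ, MapsTo (fun t : ℂ => x + t • v) (ball 0 δ) U := by
  have hline : Tendsto (fun y : E × ℂ => y.1 + y.2 • v) (𝓝 (p, 0)) (𝓝 p) :=
    Continuous.tendsto' (by fun_prop) _ _ (by simp)
  obtain ⟨δ, hδ, hmem⟩ := Metric.mem_nhds_iff.1 (hline hU)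
  rw [← ball_prod_same] at hmem
  exact ⟨δ, hδ, fun x hx t ht => hmem (mk_mem_prod hx ht)⟩

theorem differentiableOn_lineDeriv_of_dist_le [CompleteSpace F] {f : E → F} {S U : Set E} {v : E}
    {δ M : ℝ} (hS : IsOpen S) (hδ : 0 < δ) (hf : DifferentiableOn ℂ f U)
    (hM : ∀ x ∈ U, ∀ y ∈ U, dist (f x) (f y) ≤ M)
    (hmaps : ∀ x ∈ S, MapsTo (fun t : ℂ => x + t • v) (ball 0 δ) U) :
    DifferentiableOn ℂ (fun x => lineDeriv ℂ f x v) S := by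
  have hcenter : ∀ x ∈ S, x + (0 : ℂ) • v ∈ U := fun x hx => hmaps x hx (mem_ball_self hδ)
  have hlim : TendstoUniformlyOn (fun s x => dslope (fun t : ℂ => f (x + t • v)) 0 s)
      (fun x => lineDeriv ℂ f x v) (𝓝[≠] 0) S :=
    tendstoUniformlyOn_dslope_deriv hδ
      (fun x hx => hf.comp (by fun_prop) (hmaps x hx))
      fun x hx s hs => hM _ (hmaps x hx hs) _ (hcenter x hx)
  refine differentiableOn_of_tendstoUniformlyOn hS ?_ hlim
  filter_upwards [self_mem_nhdsWithin, mem_nhdsWithin_of_mem_nhds (ball_mem_nhds 0 hδ)]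
    with s hs0 hs
  simp only [dslope_of_ne _ hs0, slope_def_module]
  exact ((hf.comp (by fun_prop) fun x hx => hmaps x hx hs).sub
    (hf.comp (by fun_prop) hcenter)).const_smul _

theorem differentiableOn_fderiv_apply [CompleteSpace F] {f : E → F} {U : Set E} (hU : IsOpen U)
    (hf : DifferentiableOn ℂ f U) (v : E) : DifferentiableOn ℂ (fun x => fderiv ℂ f x v) U := by
  intro p hp
  have hfp : ContinuousAt f p := (hf.differentiableAt (hU.mem_nhds hp)).continuousAt
  obtain ⟨δ, hδ, hmaps⟩ := exists_ball_add_smul_mem_of_mem_nhds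
    (inter_mem (hU.mem_nhds hp) (hfp (ball_mem_nhds (f p) one_pos))) v
  have hline : DifferentiableOn ℂ (fun x => lineDeriv ℂ f x v) (ball p δ) := by
    refine differentiableOn_lineDeriv_of_dist_le (M := 1 + 1) isOpen_ball hδ
      (hf.mono inter_subset_left) (fun x hx y hy => ?_) hmaps
    exact (dist_triangle_right _ _ (f p)).trans
      (add_le_add (mem_ball.1 hx.2).le (mem_ball.1 hy.2).le)
  have hfderiv : DifferentiableOn ℂ (fun x => fderiv ℂ f x v) (ball p δ) :=
    hline.congr fun x hx => by
      have hx' : x ∈ U := by simpa using (hmaps x hx (mem_ball_self hδ)).1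
      exact (hf.differentiableAt (hU.mem_nhds hx')).lineDeriv_eq_fderiv.symm
  exact (hfderiv.differentiableAt (ball_mem_nhds p hδ)).differentiableWithinAt

end

section

variable {Ω : Set (ℂ × ℂ)} {f g : ℂ × ℂ → ℂ} {p : ℂ × ℂ}

theorem pdx_eq_fderiv (hf : DifferentiableAt ℂ f p) : pdx f p = fderiv ℂ f p (1, 0) :=
  (hf.hasFDerivAt.comp_hasDerivAt p.1
    ((hasDerivAt_id p.1).prodMk (hasDerivAt_const p.1 p.2))).deriv

theorem pdy_eq_fderiv (hf : DifferentiableAt ℂ f p) : pdy f p = fderiv ℂ f p (0, 1) :=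
  (hf.hasFDerivAt.comp_hasDerivAt p.2
    ((hasDerivAt_const p.2 p.1).prodMk (hasDerivAt_id p.2))).deriv

theorem differentiableOn_pdx (hΩ : IsOpen Ω) (hf : DifferentiableOn ℂ f Ω) :
    DifferentiableOn ℂ (pdx f) Ω :=
  (differentiableOn_fderiv_apply hΩ hf (1, 0)).congr fun _ hp =>
    pdx_eq_fderiv (hf.differentiableAt (hΩ.mem_nhds hp))

theorem differentiableOn_pdy (hΩ : IsOpen Ω) (hf : DifferentiableOn ℂ f Ω) :
    DifferentiableOn ℂ (pdy f) Ω :=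
  (differentiableOn_fderiv_apply hΩ hf (0, 1)).congr fun _ hp =>
    pdy_eq_fderiv (hf.differentiableAt (hΩ.mem_nhds hp))

theorem pdx_congr (hΩ : IsOpen Ω) (h : Set.EqOn f g Ω) (hp : p ∈ Ω) : pdx f p = pdx g p := by
  have hc : ContinuousAt (fun x : ℂ => (x, p.2)) p.1 := by fun_prop
  refine Filter.EventuallyEq.deriv_eq ?_
  filter_upwards [hc.preimage_mem_nhds (hΩ.mem_nhds hp)] with x hx using h hx

theorem pdy_congr (hΩ : IsOpen Ω) (h : Set.EqOn f g Ω) (hp : p ∈ Ω) : pdy f p = pdy g p := by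
  have hc : ContinuousAt (fun y : ℂ => (p.1, y)) p.2 := by fun_prop
  refine Filter.EventuallyEq.deriv_eq ?_
  filter_upwards [hc.preimage_mem_nhds (hΩ.mem_nhds hp)] with y hy using h hy

theorem pdy_pdx_eq_pdx_pdy (hΩ : IsOpen Ω) (hf : DifferentiableOn ℂ f Ω) (hp : p ∈ Ω) :
    pdy (pdx f) p = pdx (pdy f) p := by
  have hx := (differentiableOn_pdx hΩ hf).differentiableAt (hΩ.mem_nhds hp)
  have hy := (differentiableOn_pdy hΩ hf).differentiableAt (hΩ.mem_nhds hp)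
  have hfderiv : ∀ᶠ q in nhds p, HasFDerivAt f (pdx f q • ContinuousLinearMap.fst ℂ ℂ ℂ +
      pdy f q • ContinuousLinearMap.snd ℂ ℂ ℂ) q := by
    filter_upwards [hΩ.mem_nhds hp] with q hq
    have hfq := hf.differentiableAt (hΩ.mem_nhds hq)
    convert hfq.hasFDerivAt using 1
    ext <;> simp [pdx_eq_fderiv hfq, pdy_eq_fderiv hfq]
  have hsymm := second_derivative_symmetric_of_eventually hfderiv
    ((hx.hasFDerivAt.smul_const (ContinuousLinearMap.fst ℂ ℂ ℂ)).add
      (hy.hasFDerivAt.smul_const (ContinuousLinearMap.snd ℂ ℂ ℂ))) (0, 1) (1, 0)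
  simpa [pdy_eq_fderiv hx, pdx_eq_fderiv hy] using hsymm

theorem pdx_add (hf : DifferentiableAt ℂ f p) (hg : DifferentiableAt ℂ g p) :
    pdx (fun q => f q + g q) p = pdx f p + pdx g p := by
  rw [pdx_eq_fderiv (hf.fun_add hg), pdx_eq_fderiv hf, pdx_eq_fderiv hg, fderiv_fun_add hf hg]
  rfl

theorem pdy_add (hf : DifferentiableAt ℂ f p) (hg : DifferentiableAt ℂ g p) :
    pdy (fun q => f q + g q) p = pdy f p + pdy g p := by
  rw [pdy_eq_fderiv (hf.fun_add hg), pdy_eq_fderiv hf, pdy_eq_fderiv hg, fderiv_fun_add hf hg]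
  rfl

theorem pdx_sub (hf : DifferentiableAt ℂ f p) (hg : DifferentiableAt ℂ g p) :
    pdx (fun q => f q - g q) p = pdx f p - pdx g p := by
  rw [pdx_eq_fderiv (hf.fun_sub hg), pdx_eq_fderiv hf, pdx_eq_fderiv hg, fderiv_fun_sub hf hg]
  rfl

theorem pdy_sub (hf : DifferentiableAt ℂ f p) (hg : DifferentiableAt ℂ g p) :
    pdy (fun q => f q - g q) p = pdy f p - pdy g p := by
  rw [pdy_eq_fderiv (hf.fun_sub hg), pdy_eq_fderiv hf, pdy_eq_fderiv hg, fderiv_fun_sub hf hg]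
  rfl

theorem pdx_mul (hf : DifferentiableAt ℂ f p) (hg : DifferentiableAt ℂ g p) :
    pdx (fun q => f q * g q) p = pdx f p * g p + f p * pdx g p := by
  rw [pdx_eq_fderiv (hf.fun_mul hg), pdx_eq_fderiv hf, pdx_eq_fderiv hg, fderiv_fun_mul hf hg]
  simp [mul_comm, add_comm]

theorem pdy_mul (hf : DifferentiableAt ℂ f p) (hg : DifferentiableAt ℂ g p) :
    pdy (fun q => f q * g q) p = pdy f p * g p + f p * pdy g p := by
  rw [pdy_eq_fderiv (hf.fun_mul hg), pdy_eq_fderiv hf, pdy_eq_fderiv hg, fderiv_fun_mul hf hg]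
  simp [mul_comm, add_comm]

theorem pdx_const_mul_add_const_mul (a b : ℂ) (hf : DifferentiableAt ℂ f p)
    (hg : DifferentiableAt ℂ g p) :
    pdx (fun q => a * f q + b * g q) p = a * pdx f p + b * pdx g p := by
  rw [pdx_add (hf.const_mul a) (hg.const_mul b)]
  simp [pdx]

theorem pdy_const_mul_add_const_mul (a b : ℂ) (hf : DifferentiableAt ℂ f p)
    (hg : DifferentiableAt ℂ g p) :
    pdy (fun q => a * f q + b * g q) p = a * pdy f p + b * pdy g p := by
  rw [pdy_add (hf.const_mul a) (hg.const_mul b)]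
  simp [pdy]

end

section

variable {Ω : Set (ℂ × ℂ)} {α β γ δ F G w : ℂ × ℂ → ℂ} {p : ℂ × ℂ}

/-- `w` is a holomorphic solution on `Ω` of the linear system `w_xx = α w_x + F w_y`,
`w_xy = β w_x + γ w_y`, `w_yy = G w_x + δ w_y`. -/
structure IsSolutionOn (α F β γ G δ w : ℂ × ℂ → ℂ) (Ω : Set (ℂ × ℂ)) : Prop where
  differentiableOn : DifferentiableOn ℂ w Ω
  pdx_pdx : ∀ q ∈ Ω, pdx (pdx w) q = α q * pdx w q + F q * pdy w q
  pdx_pdy : ∀ q ∈ Ω, pdx (pdy w) q = β q * pdx w q + γ q * pdy w q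
  pdy_pdy : ∀ q ∈ Ω, pdy (pdy w) q = G q * pdx w q + δ q * pdy w q

theorem IsSolutionOn.congr {α' β' γ' δ' F' G' : ℂ × ℂ → ℂ} (hw : IsSolutionOn α F β γ G δ w Ω)
    (hα : Set.EqOn α α' Ω) (hF : Set.EqOn F F' Ω) (hβ : Set.EqOn β β' Ω)
    (hγ : Set.EqOn γ γ' Ω) (hG : Set.EqOn G G' Ω) (hδ : Set.EqOn δ δ' Ω) :
    IsSolutionOn α' F' β' γ' G' δ' w Ω where
  differentiableOn := hw.differentiableOn
  pdx_pdx q hq := by rw [← hα hq, ← hF hq, hw.pdx_pdx q hq]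
  pdx_pdy q hq := by rw [← hβ hq, ← hγ hq, hw.pdx_pdy q hq]
  pdy_pdy q hq := by rw [← hG hq, ← hδ hq, hw.pdy_pdy q hq]

theorem IsSolutionOn.pdx_pdx_pdy_relation (hw : IsSolutionOn α F β γ G δ w Ω) (hΩ : IsOpen Ω)
    (hp : p ∈ Ω) (hα : DifferentiableAt ℂ α p) (hF : DifferentiableAt ℂ F p)
    (hβ : DifferentiableAt ℂ β p) (hγ : DifferentiableAt ℂ γ p) :
    (pdy α p + F p * G p - pdx β p - γ p * β p) * pdx w p +
      (α p * γ p + pdy F p + F p * δ p - β p * F p - pdx γ p - γ p ^ 2) * pdy w p = 0 := by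
  have hwx := differentiableOn_pdx hΩ hw.differentiableOn
  have hwx' := hwx.differentiableAt (hΩ.mem_nhds hp)
  have hwy' := (differentiableOn_pdy hΩ hw.differentiableOn).differentiableAt (hΩ.mem_nhds hp)
  have hcomm : Set.EqOn (pdy (pdx w)) (pdx (pdy w)) Ω := fun q hq =>
    pdy_pdx_eq_pdx_pdy hΩ hw.differentiableOn hq
  have hthird : pdy (pdx (pdx w)) p = pdx (pdx (pdy w)) p :=
    (pdy_pdx_eq_pdx_pdy hΩ hwx hp).trans (pdx_congr hΩ hcomm hp)
  rw [pdy_congr hΩ hw.pdx_pdx hp, pdx_congr hΩ hw.pdx_pdy hp,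
    pdy_add (hα.fun_mul hwx') (hF.fun_mul hwy'), pdx_add (hβ.fun_mul hwx') (hγ.fun_mul hwy'),
    pdy_mul hα hwx', pdy_mul hF hwy', pdx_mul hβ hwx', pdx_mul hγ hwy',
    hcomm hp, hw.pdx_pdx p hp, hw.pdx_pdy p hp, hw.pdy_pdy p hp] at hthird
  linear_combination hthird

theorem IsSolutionOn.pdx_pdy_pdy_relation (hw : IsSolutionOn α F β γ G δ w Ω) (hΩ : IsOpen Ω)
    (hp : p ∈ Ω) (hβ : DifferentiableAt ℂ β p) (hγ : DifferentiableAt ℂ γ p)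
    (hG : DifferentiableAt ℂ G p) (hδ : DifferentiableAt ℂ δ p) :
    (pdx G p + G p * α p + δ p * β p - pdy β p - β p ^ 2 - γ p * G p) * pdx w p +
      (G p * F p + pdx δ p - β p * γ p - pdy γ p) * pdy w p = 0 := by
  have hwy := differentiableOn_pdy hΩ hw.differentiableOn
  have hwx' := (differentiableOn_pdx hΩ hw.differentiableOn).differentiableAt (hΩ.mem_nhds hp)
  have hwy' := hwy.differentiableAt (hΩ.mem_nhds hp)
  have hthird : pdx (pdy (pdy w)) p = pdy (pdx (pdy w)) p := (pdy_pdx_eq_pdx_pdy hΩ hwy hp).symm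
  rw [pdx_congr hΩ hw.pdy_pdy hp, pdy_congr hΩ hw.pdx_pdy hp,
    pdx_add (hG.fun_mul hwx') (hδ.fun_mul hwy'), pdy_add (hβ.fun_mul hwx') (hγ.fun_mul hwy'),
    pdx_mul hG hwx', pdx_mul hδ hwy', pdy_mul hβ hwx', pdy_mul hγ hwy',
    pdy_pdx_eq_pdx_pdy hΩ hw.differentiableOn hp,
    hw.pdx_pdx p hp, hw.pdx_pdy p hp, hw.pdy_pdy p hp] at hthird
  linear_combination hthird

theorem eq_zero_and_eq_zero_of_det_ne_zero {R : Type*} [CommRing R] [NoZeroDivisors R]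
    {a₁ a₂ b₁ b₂ s t : R} (h : a₁ * b₂ - a₂ * b₁ ≠ 0)
    (h₁ : s * a₁ + t * b₁ = 0) (h₂ : s * a₂ + t * b₂ = 0) : s = 0 ∧ t = 0 := by
  constructor
  · refine (mul_eq_zero.1 (?_ : s * (a₁ * b₂ - a₂ * b₁) = 0)).resolve_right h
    linear_combination b₂ * h₁ - b₁ * h₂
  · refine (mul_eq_zero.1 (?_ : t * (a₁ * b₂ - a₂ * b₁) = 0)).resolve_right h
    linear_combination a₁ * h₂ - a₂ * h₁

theorem IsSolutionOn.compatibility {w₁ w₂ : ℂ × ℂ → ℂ} (hw₁ : IsSolutionOn α F β γ G δ w₁ Ω)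
    (hw₂ : IsSolutionOn α F β γ G δ w₂ Ω) (hΩ : IsOpen Ω) (hp : p ∈ Ω) (hJ : Jac w₁ w₂ p ≠ 0)
    (hα : DifferentiableAt ℂ α p) (hF : DifferentiableAt ℂ F p) (hβ : DifferentiableAt ℂ β p)
    (hγ : DifferentiableAt ℂ γ p) (hG : DifferentiableAt ℂ G p) (hδ : DifferentiableAt ℂ δ p) :
    (pdy α p + F p * G p - pdx β p - γ p * β p = 0 ∧
      α p * γ p + pdy F p + F p * δ p - β p * F p - pdx γ p - γ p ^ 2 = 0) ∧
    (pdx G p + G p * α p + δ p * β p - pdy β p - β p ^ 2 - γ p * G p = 0 ∧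
      G p * F p + pdx δ p - β p * γ p - pdy γ p = 0) :=
  ⟨eq_zero_and_eq_zero_of_det_ne_zero hJ (hw₁.pdx_pdx_pdy_relation hΩ hp hα hF hβ hγ)
      (hw₂.pdx_pdx_pdy_relation hΩ hp hα hF hβ hγ),
    eq_zero_and_eq_zero_of_det_ne_zero hJ (hw₁.pdx_pdy_pdy_relation hΩ hp hβ hγ hG hδ)
      (hw₂.pdx_pdy_pdy_relation hΩ hp hβ hγ hG hδ)⟩

end

section

variable {Ω : Set (ℂ × ℂ)} {f g : ℂ × ℂ → ℂ} {p : ℂ × ℂ}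

/-- The logarithmic derivative `f_x / f` in the first variable; it is `0` where `f` vanishes. -/
def logPdx (f : ℂ × ℂ → ℂ) (p : ℂ × ℂ) : ℂ := pdx f p / f p

/-- The logarithmic derivative `f_y / f` in the second variable; it is `0` where `f` vanishes. -/
def logPdy (f : ℂ × ℂ → ℂ) (p : ℂ × ℂ) : ℂ := pdy f p / f p

theorem logPdx_congr (hΩ : IsOpen Ω) (h : Set.EqOn f g Ω) (hp : p ∈ Ω) :
    logPdx f p = logPdx g p := by
  rw [logPdx, logPdx, pdx_congr hΩ h hp, h hp]

theorem logPdy_congr (hΩ : IsOpen Ω) (h : Set.EqOn f g Ω) (hp : p ∈ Ω) :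
    logPdy f p = logPdy g p := by
  rw [logPdy, logPdy, pdy_congr hΩ h hp, h hp]

theorem logPdx_zpow (hf : DifferentiableAt ℂ f p) (n : ℤ) :
    logPdx (fun q => f q ^ n) p = n * logPdx f p :=
  logDeriv_fun_zpow (f := fun x => f (x, p.2))
    (hf.comp p.1 (by fun_prop : DifferentiableAt ℂ (fun x : ℂ => (x, p.2)) p.1)) n

theorem logPdy_zpow (hf : DifferentiableAt ℂ f p) (n : ℤ) :
    logPdy (fun q => f q ^ n) p = n * logPdy f p :=
  logDeriv_fun_zpow (f := fun y => f (p.1, y))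
    (hf.comp p.2 (by fun_prop : DifferentiableAt ℂ (fun y : ℂ => (p.1, y)) p.2)) n

theorem logPdx_eq_neg_mul_of_pow_eq_inv {n : ℕ} (hΩ : IsOpen Ω) (hf : DifferentiableOn ℂ f Ω)
    (hfg : ∀ q ∈ Ω, f q ^ n = (g q)⁻¹) (hp : p ∈ Ω) : logPdx g p = -n * logPdx f p := by
  have hg : Set.EqOn g (fun q => f q ^ (-n : ℤ)) Ω := fun q hq => by
    simp [hfg q hq]
  rw [logPdx_congr hΩ hg hp, logPdx_zpow (hf.differentiableAt (hΩ.mem_nhds hp))]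
  push_cast
  rfl

theorem logPdy_eq_neg_mul_of_pow_eq_inv {n : ℕ} (hΩ : IsOpen Ω) (hf : DifferentiableOn ℂ f Ω)
    (hfg : ∀ q ∈ Ω, f q ^ n = (g q)⁻¹) (hp : p ∈ Ω) : logPdy g p = -n * logPdy f p := by
  have hg : Set.EqOn g (fun q => f q ^ (-n : ℤ)) Ω := fun q hq => by
    simp [hfg q hq]
  rw [logPdy_congr hΩ hg hp, logPdy_zpow (hf.differentiableAt (hΩ.mem_nhds hp))]
  push_cast
  rfl

theorem differentiableOn_logPdx (hΩ : IsOpen Ω) (hf : DifferentiableOn ℂ f Ω)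
    (hf0 : ∀ q ∈ Ω, f q ≠ 0) : DifferentiableOn ℂ (logPdx f) Ω :=
  (differentiableOn_pdx hΩ hf).fun_mul (hf.fun_inv hf0)

theorem differentiableOn_logPdy (hΩ : IsOpen Ω) (hf : DifferentiableOn ℂ f Ω)
    (hf0 : ∀ q ∈ Ω, f q ≠ 0) : DifferentiableOn ℂ (logPdy f) Ω :=
  (differentiableOn_pdy hΩ hf).fun_mul (hf.fun_inv hf0)

theorem pdx_eq_logPdx_mul (hf : f p ≠ 0) : pdx f p = logPdx f p * f p :=
  (div_mul_cancel₀ _ hf).symm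

theorem pdy_eq_logPdy_mul (hf : f p ≠ 0) : pdy f p = logPdy f p * f p :=
  (div_mul_cancel₀ _ hf).symm

theorem pdx_pdx_eq_logPdx (hΩ : IsOpen Ω) (hf : DifferentiableOn ℂ f Ω)
    (hf0 : ∀ q ∈ Ω, f q ≠ 0) (hp : p ∈ Ω) :
    pdx (pdx f) p = (pdx (logPdx f) p + logPdx f p ^ 2) * f p := by
  rw [pdx_congr hΩ (fun q hq => pdx_eq_logPdx_mul (hf0 q hq)) hp,
    pdx_mul ((differentiableOn_logPdx hΩ hf hf0).differentiableAt (hΩ.mem_nhds hp))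
      (hf.differentiableAt (hΩ.mem_nhds hp)), pdx_eq_logPdx_mul (hf0 p hp)]
  ring

theorem pdx_pdy_eq_logPdx_logPdy (hΩ : IsOpen Ω) (hf : DifferentiableOn ℂ f Ω)
    (hf0 : ∀ q ∈ Ω, f q ≠ 0) (hp : p ∈ Ω) :
    pdx (pdy f) p = (pdx (logPdy f) p + logPdx f p * logPdy f p) * f p := by
  rw [pdx_congr hΩ (fun q hq => pdy_eq_logPdy_mul (hf0 q hq)) hp,
    pdx_mul ((differentiableOn_logPdy hΩ hf hf0).differentiableAt (hΩ.mem_nhds hp))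
      (hf.differentiableAt (hΩ.mem_nhds hp)), pdx_eq_logPdx_mul (hf0 p hp)]
  ring

theorem pdy_pdy_eq_logPdy (hΩ : IsOpen Ω) (hf : DifferentiableOn ℂ f Ω)
    (hf0 : ∀ q ∈ Ω, f q ≠ 0) (hp : p ∈ Ω) :
    pdy (pdy f) p = (pdy (logPdy f) p + logPdy f p ^ 2) * f p := by
  rw [pdy_congr hΩ (fun q hq => pdy_eq_logPdy_mul (hf0 q hq)) hp,
    pdy_mul ((differentiableOn_logPdy hΩ hf hf0).differentiableAt (hΩ.mem_nhds hp))
      (hf.differentiableAt (hΩ.mem_nhds hp)), pdy_eq_logPdy_mul (hf0 p hp)]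
  ring

end

section

variable {Ω : Set (ℂ × ℂ)} {w₁ w₂ : ℂ × ℂ → ℂ} {p : ℂ × ℂ}

/-- The coefficient `A` in the solution of the two equations `cᵢ = A ∂ₓwᵢ + B ∂ᵧwᵢ` by
Cramer's rule. -/
def cramerX (w₁ w₂ : ℂ × ℂ → ℂ) (c₁ c₂ : ℂ) (p : ℂ × ℂ) : ℂ :=
  (c₁ * pdy w₂ p - c₂ * pdy w₁ p) / Jac w₁ w₂ p

/-- The coefficient `B` in the solution of the two equations `cᵢ = A ∂ₓwᵢ + B ∂ᵧwᵢ` by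
Cramer's rule. -/
def cramerY (w₁ w₂ : ℂ × ℂ → ℂ) (c₁ c₂ : ℂ) (p : ℂ × ℂ) : ℂ :=
  (pdx w₁ p * c₂ - pdx w₂ p * c₁) / Jac w₁ w₂ p

theorem eq_cramerX_mul_add_cramerY_mul (hJ : Jac w₁ w₂ p ≠ 0) (c₁ c₂ : ℂ) :
    c₁ = cramerX w₁ w₂ c₁ c₂ p * pdx w₁ p + cramerY w₁ w₂ c₁ c₂ p * pdy w₁ p ∧
    c₂ = cramerX w₁ w₂ c₁ c₂ p * pdx w₂ p + cramerY w₁ w₂ c₁ c₂ p * pdy w₂ p := by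
  simp only [cramerX, cramerY]
  constructor <;> field_simp <;> simp only [Jac] <;> ring

theorem isSolutionOn_cramer (hw₁ : DifferentiableOn ℂ w₁ Ω) (hw₂ : DifferentiableOn ℂ w₂ Ω)
    (hJ : ∀ q ∈ Ω, Jac w₁ w₂ q ≠ 0) :
    ∀ w ∈ ({w₁, w₂} : Set (ℂ × ℂ → ℂ)), IsSolutionOn
      (fun q => cramerX w₁ w₂ (pdx (pdx w₁) q) (pdx (pdx w₂) q) q)
      (fun q => cramerY w₁ w₂ (pdx (pdx w₁) q) (pdx (pdx w₂) q) q)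
      (fun q => cramerX w₁ w₂ (pdx (pdy w₁) q) (pdx (pdy w₂) q) q)
      (fun q => cramerY w₁ w₂ (pdx (pdy w₁) q) (pdx (pdy w₂) q) q)
      (fun q => cramerX w₁ w₂ (pdy (pdy w₁) q) (pdy (pdy w₂) q) q)
      (fun q => cramerY w₁ w₂ (pdy (pdy w₁) q) (pdy (pdy w₂) q) q) w Ω := by
  have hcramer := fun q hq => eq_cramerX_mul_add_cramerY_mul (hJ q hq)
  rintro w (rfl | rfl)
  · exact ⟨hw₁, fun q hq => (hcramer q hq _ _).1, fun q hq => (hcramer q hq _ _).1,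
      fun q hq => (hcramer q hq _ _).1⟩
  · exact ⟨hw₂, fun q hq => (hcramer q hq _ _).2, fun q hq => (hcramer q hq _ _).2,
      fun q hq => (hcramer q hq _ _).2⟩

theorem brX_eq_cramerY : brX w₁ w₂ p = cramerY w₁ w₂ (pdx (pdx w₁) p) (pdx (pdx w₂) p) p :=
  rfl

theorem brY_eq_cramerX : brY w₁ w₂ p = cramerX w₁ w₂ (pdy (pdy w₁) p) (pdy (pdy w₂) p) p := by
  simp only [brY, cramerX]
  ring

theorem sqX_eq_cramer : sqX w₁ w₂ p =
    2 * cramerY w₁ w₂ (pdx (pdy w₁) p) (pdx (pdy w₂) p) p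
      - cramerX w₁ w₂ (pdx (pdx w₁) p) (pdx (pdx w₂) p) p := by
  simp only [sqX, cramerX, cramerY]
  ring

theorem sqY_eq_cramer : sqY w₁ w₂ p =
    2 * cramerX w₁ w₂ (pdx (pdy w₁) p) (pdx (pdy w₂) p) p
      - cramerY w₁ w₂ (pdy (pdy w₁) p) (pdy (pdy w₂) p) p := by
  simp only [sqY, cramerX, cramerY]
  ring

theorem logPdx_jac_eq_cramer (hΩ : IsOpen Ω) (hw₁ : DifferentiableOn ℂ w₁ Ω)
    (hw₂ : DifferentiableOn ℂ w₂ Ω) (hp : p ∈ Ω) : logPdx (Jac w₁ w₂) p =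
    cramerX w₁ w₂ (pdx (pdx w₁) p) (pdx (pdx w₂) p) p
      + cramerY w₁ w₂ (pdx (pdy w₁) p) (pdx (pdy w₂) p) p := by
  have h₁x := (differentiableOn_pdx hΩ hw₁).differentiableAt (hΩ.mem_nhds hp)
  have h₁y := (differentiableOn_pdy hΩ hw₁).differentiableAt (hΩ.mem_nhds hp)
  have h₂x := (differentiableOn_pdx hΩ hw₂).differentiableAt (hΩ.mem_nhds hp)
  have h₂y := (differentiableOn_pdy hΩ hw₂).differentiableAt (hΩ.mem_nhds hp)
  have hJ : pdx (Jac w₁ w₂) p = pdx (pdx w₁) p * pdy w₂ p + pdx w₁ p * pdx (pdy w₂) p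
      - (pdx (pdx w₂) p * pdy w₁ p + pdx w₂ p * pdx (pdy w₁) p) := by
    rw [← pdx_mul h₁x h₂y, ← pdx_mul h₂x h₁y]
    exact pdx_sub (h₁x.fun_mul h₂y) (h₂x.fun_mul h₁y)
  rw [logPdx, hJ, cramerX, cramerY]
  ring

theorem logPdy_jac_eq_cramer (hΩ : IsOpen Ω) (hw₁ : DifferentiableOn ℂ w₁ Ω)
    (hw₂ : DifferentiableOn ℂ w₂ Ω) (hp : p ∈ Ω) : logPdy (Jac w₁ w₂) p =
    cramerX w₁ w₂ (pdx (pdy w₁) p) (pdx (pdy w₂) p) p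
      + cramerY w₁ w₂ (pdy (pdy w₁) p) (pdy (pdy w₂) p) p := by
  have h₁x := (differentiableOn_pdx hΩ hw₁).differentiableAt (hΩ.mem_nhds hp)
  have h₁y := (differentiableOn_pdy hΩ hw₁).differentiableAt (hΩ.mem_nhds hp)
  have h₂x := (differentiableOn_pdx hΩ hw₂).differentiableAt (hΩ.mem_nhds hp)
  have h₂y := (differentiableOn_pdy hΩ hw₂).differentiableAt (hΩ.mem_nhds hp)
  have hJ : pdy (Jac w₁ w₂) p = pdx (pdy w₁) p * pdy w₂ p + pdx w₁ p * pdy (pdy w₂) p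
      - (pdx (pdy w₂) p * pdy w₁ p + pdx w₂ p * pdy (pdy w₁) p) := by
    rw [← pdy_pdx_eq_pdx_pdy hΩ hw₁ hp, ← pdy_pdx_eq_pdx_pdy hΩ hw₂ hp,
      ← pdy_mul h₁x h₂y, ← pdy_mul h₂x h₁y]
    exact pdy_sub (h₁x.fun_mul h₂y) (h₂x.fun_mul h₁y)
  rw [logPdy, hJ, cramerX, cramerY]
  ring

variable {F₁ F₂ P₁ P₂ u v : ℂ × ℂ → ℂ}

theorem isSolutionOn_of_brackets (hΩ : IsOpen Ω) (hw₁ : DifferentiableOn ℂ w₁ Ω)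
    (hw₂ : DifferentiableOn ℂ w₂ Ω) (hJ : ∀ q ∈ Ω, Jac w₁ w₂ q ≠ 0)
    (hF₁ : ∀ q ∈ Ω, brX w₁ w₂ q = F₁ q) (hF₂ : ∀ q ∈ Ω, brY w₁ w₂ q = F₂ q)
    (hP₁ : ∀ q ∈ Ω, sqX w₁ w₂ q = P₁ q) (hP₂ : ∀ q ∈ Ω, sqY w₁ w₂ q = P₂ q)
    (hu : ∀ q ∈ Ω, logPdx (Jac w₁ w₂) q = -3 * u q)
    (hv : ∀ q ∈ Ω, logPdy (Jac w₁ w₂) q = -3 * v q) :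
    ∀ w ∈ ({w₁, w₂} : Set (ℂ × ℂ → ℂ)),
      IsSolutionOn (fun q => -1 / 3 * P₁ q + -2 * u q) F₁
        (fun q => 1 / 3 * P₂ q + -1 * v q) (fun q => 1 / 3 * P₁ q + -1 * u q)
        F₂ (fun q => -1 / 3 * P₂ q + -2 * v q) w Ω := by
  have hα : ∀ q ∈ Ω, cramerX w₁ w₂ (pdx (pdx w₁) q) (pdx (pdx w₂) q) q =
      -1 / 3 * P₁ q + -2 * u q := fun q hq => by
    linear_combination 2 / 3 * (hu q hq - logPdx_jac_eq_cramer hΩ hw₁ hw₂ hq)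
      - 1 / 3 * (hP₁ q hq - sqX_eq_cramer)
  have hβ : ∀ q ∈ Ω, cramerX w₁ w₂ (pdx (pdy w₁) q) (pdx (pdy w₂) q) q =
      1 / 3 * P₂ q + -1 * v q := fun q hq => by
    linear_combination 1 / 3 * (hv q hq - logPdy_jac_eq_cramer hΩ hw₁ hw₂ hq)
      + 1 / 3 * (hP₂ q hq - sqY_eq_cramer)
  have hγ : ∀ q ∈ Ω, cramerY w₁ w₂ (pdx (pdy w₁) q) (pdx (pdy w₂) q) q =
      1 / 3 * P₁ q + -1 * u q := fun q hq => by
    linear_combination 1 / 3 * (hu q hq - logPdx_jac_eq_cramer hΩ hw₁ hw₂ hq)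
      + 1 / 3 * (hP₁ q hq - sqX_eq_cramer)
  have hδ : ∀ q ∈ Ω, cramerY w₁ w₂ (pdy (pdy w₁) q) (pdy (pdy w₂) q) q =
      -1 / 3 * P₂ q + -2 * v q := fun q hq => by
    linear_combination 2 / 3 * (hv q hq - logPdy_jac_eq_cramer hΩ hw₁ hw₂ hq)
      - 1 / 3 * (hP₂ q hq - sqY_eq_cramer)
  exact fun w hw => (isSolutionOn_cramer hw₁ hw₂ hJ w hw).congr hα
    (fun q hq => brX_eq_cramerY.symm.trans (hF₁ q hq)) hβ hγ
    (fun q hq => brY_eq_cramerX.symm.trans (hF₂ q hq)) hδ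

theorem riccati_of_isSolutionOn (hΩ : IsOpen Ω) (hp : p ∈ Ω) (hJ : Jac w₁ w₂ p ≠ 0)
    (hF₁ : DifferentiableAt ℂ F₁ p) (hF₂ : DifferentiableAt ℂ F₂ p)
    (hP₁ : DifferentiableAt ℂ P₁ p) (hP₂ : DifferentiableAt ℂ P₂ p)
    (hu : DifferentiableAt ℂ u p) (hv : DifferentiableAt ℂ v p)
    (hw : ∀ w ∈ ({w₁, w₂} : Set (ℂ × ℂ → ℂ)),
      IsSolutionOn (fun q => -1 / 3 * P₁ q + -2 * u q) F₁
        (fun q => 1 / 3 * P₂ q + -1 * v q) (fun q => 1 / 3 * P₁ q + -1 * u q)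
        F₂ (fun q => -1 / 3 * P₂ q + -2 * v q) w Ω) :
    (pdx u p + u p ^ 2 + 1 / 3 * P₁ p * u p - F₁ p * v p
      + (pdy F₁ p - 1 / 3 * pdx P₁ p - 2 / 9 * P₁ p ^ 2 - 2 / 3 * F₁ p * P₂ p) = 0) ∧
    (pdx v p + u p * v p - 1 / 3 * P₂ p * u p - 1 / 3 * P₁ p * v p
      + (1 / 3 * pdx P₂ p + 1 / 3 * pdy P₁ p + 1 / 9 * P₁ p * P₂ p - F₁ p * F₂ p) = 0) ∧
    (pdy v p + v p ^ 2 + 1 / 3 * P₂ p * v p - F₂ p * u p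
      + (pdx F₂ p - 1 / 3 * pdy P₂ p - 2 / 9 * P₂ p ^ 2 - 2 / 3 * F₂ p * P₁ p) = 0) := by
  obtain ⟨⟨huy_vx, hux⟩, hvy, hvx_uy⟩ := (hw w₁ (by simp)).compatibility (hw w₂ (by simp)) hΩ hp hJ
    ((hP₁.const_mul _).fun_add (hu.const_mul _)) hF₁ ((hP₂.const_mul _).fun_add (hv.const_mul _))
    ((hP₁.const_mul _).fun_add (hu.const_mul _)) hF₂ ((hP₂.const_mul _).fun_add (hv.const_mul _))
  simp only [pdx_const_mul_add_const_mul _ _ hP₁ hu, pdx_const_mul_add_const_mul _ _ hP₂ hv,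
    pdy_const_mul_add_const_mul _ _ hP₁ hu, pdy_const_mul_add_const_mul _ _ hP₂ hv]
    at huy_vx hux hvy hvx_uy
  refine ⟨?_, ?_, ?_⟩
  · linear_combination hux
  -- This combination eliminates `pdy u p`.
  · linear_combination -1 / 3 * huy_vx - 2 / 3 * hvx_uy
  · linear_combination hvy

end

/-- **Main Theorem 1.** If `(w₁,w₂)` solves the over-determined
nonlinear system with right hand sides `F₁,F₂,P₁,P₂` and `z³ = Δ = 1/D` where `D` is
the Jacobian of `(w₁,w₂)` with respect to `(v₁,v₂)`, then `z` solves the associated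
linear system. Here the independent variables are `(v₁,v₂)` and `pdx`/`pdy` denote
`∂_{v₁}`/`∂_{v₂}`. -/
theorem statement10 (Ω : Set (ℂ × ℂ)) (hΩ : IsOpen Ω)
    (F₁ F₂ P₁ P₂ : ℂ × ℂ → ℂ)
    (hF₁ : DifferentiableOn ℂ F₁ Ω) (hF₂ : DifferentiableOn ℂ F₂ Ω)
    (hP₁ : DifferentiableOn ℂ P₁ Ω) (hP₂ : DifferentiableOn ℂ P₂ Ω)
    (w₁ w₂ : ℂ × ℂ → ℂ)
    (hw₁ : DifferentiableOn ℂ w₁ Ω) (hw₂ : DifferentiableOn ℂ w₂ Ω)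
    (hD : ∀ p ∈ Ω, Jac w₁ w₂ p ≠ 0)
    (hbrX : ∀ p ∈ Ω, brX w₁ w₂ p = F₁ p)
    (hbrY : ∀ p ∈ Ω, brY w₁ w₂ p = F₂ p)
    (hsqX : ∀ p ∈ Ω, sqX w₁ w₂ p = P₁ p)
    (hsqY : ∀ p ∈ Ω, sqY w₁ w₂ p = P₂ p)
    (z : ℂ × ℂ → ℂ) (hz : DifferentiableOn ℂ z Ω)
    (hz3 : ∀ p ∈ Ω, z p ^ 3 = (Jac w₁ w₂ p)⁻¹) :
    ∀ p ∈ Ω,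
      (pdx (pdx z) p + (1/3) * P₁ p * pdx z p - F₁ p * pdy z p
        + (pdy F₁ p - (1/3) * pdx P₁ p - (2/9) * P₁ p ^ 2
            - (2/3) * F₁ p * P₂ p) * z p = 0) ∧
      (pdx (pdy z) p - (1/3) * P₂ p * pdx z p - (1/3) * P₁ p * pdy z p
        + ((1/3) * pdx P₂ p + (1/3) * pdy P₁ p + (1/9) * P₁ p * P₂ p
            - F₁ p * F₂ p) * z p = 0) ∧
      (pdy (pdy z) p + (1/3) * P₂ p * pdy z p - F₂ p * pdx z p
        + (pdx F₂ p - (1/3) * pdy P₂ p - (2/9) * P₂ p ^ 2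
            - (2/3) * F₂ p * P₁ p) * z p = 0) := by
  intro p hp
  have hz0 : ∀ q ∈ Ω, z q ≠ 0 := fun q hq h0 => by
    simpa [h0, eq_comm, hD q hq] using hz3 q hq
  have hu : ∀ q ∈ Ω, logPdx (Jac w₁ w₂) q = -3 * logPdx z q := fun q hq =>
    mod_cast logPdx_eq_neg_mul_of_pow_eq_inv hΩ hz hz3 hq
  have hv : ∀ q ∈ Ω, logPdy (Jac w₁ w₂) q = -3 * logPdy z q := fun q hq =>
    mod_cast logPdy_eq_neg_mul_of_pow_eq_inv hΩ hz hz3 hq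
  have hat : ∀ {f : ℂ × ℂ → ℂ}, DifferentiableOn ℂ f Ω → DifferentiableAt ℂ f p :=
    fun hf => hf.differentiableAt (hΩ.mem_nhds hp)
  obtain ⟨hxx, hxy, hyy⟩ := riccati_of_isSolutionOn hΩ hp (hD p hp) (hat hF₁) (hat hF₂) (hat hP₁)
    (hat hP₂) (hat (differentiableOn_logPdx hΩ hz hz0)) (hat (differentiableOn_logPdy hΩ hz hz0))
    (isSolutionOn_of_brackets hΩ hw₁ hw₂ hD hbrX hbrY hsqX hsqY hu hv)
  rw [pdx_pdx_eq_logPdx hΩ hz hz0 hp, pdx_pdy_eq_logPdx_logPdy hΩ hz hz0 hp,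
    pdy_pdy_eq_logPdy hΩ hz hz0 hp, pdx_eq_logPdx_mul (hz0 p hp), pdy_eq_logPdy_mul (hz0 p hp)]
  exact ⟨by linear_combination z p * hxx, by linear_combination z p * hxy,
    by linear_combination z p * hyy⟩
end
end
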